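/- arXiv:2411.11492 — 3 statements merged into one kernel-verified Lean document; each statement's English description precedes it below -/
import Mathlib

section
/- Let d, n be natural numbers with n ≥ 1, let v_0, v_1, …, v_n and w be points of ℝ^d all of whose coordinates are rational, and set F := convexHull ℝ {v_1, …, v_n}. Assume v_0 ∈ F and that w lies in the intrinsic (relative) interior of F. Then there exist rational numbers μ_0 > 0 and μ_1, …, μ_n ≥ 0 with μ_0 + μ_1 + ⋯ + μ_n = 1 and w = μ_0 v_0 + μ_1 v_1 + ⋯ + μ_n v_n. (This is the convex-geometric step in the proof of Lemma 5.1: a rational point w in the interior of the face F can be written as a rational convex combination of the vertices v_1, …, v_n of F together with a prescribed rational point v_0 ∈ F, with strictly positive weight on v_0.) -/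
/-- Real coefficients of a rational point with respect to an affinely independent family of
rational points are rational. -/
theorem AffineIndependent.exists_rat_weights {ι κ : Type*} [Fintype ι] {z : ι → κ → ℝ}
    (hz : AffineIndependent ℝ z) (hzq : ∀ i j, ∃ q : ℚ, z i j = q) {x : κ → ℝ}
    (hx : ∀ j, ∃ q : ℚ, x j = q) {c : ι → ℝ} (hc : ∑ i, c i = 1)
    (hcx : ∑ i, c i • z i = x) : ∃ q : ι → ℚ, ∀ i, c i = q i := by
  obtain ⟨f, hf⟩ := (Algebra.linearMap ℚ ℝ).exists_leftInverse_of_injective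
    (LinearMap.ker_eq_bot.2 (algebraMap ℚ ℝ).injective)
  have hfq (q : ℚ) : f (q : ℝ) = q := LinearMap.congr_fun hf q
  have hmul (a : ℝ) (q : ℚ) : f (a * q) = f a * q := by
    rw [mul_comm, ← Rat.smul_def, map_smul, smul_eq_mul, mul_comm]
  refine ⟨fun i ↦ f (c i), fun i ↦ ?_⟩
  refine sub_eq_zero.1 (affineIndependent_iff.1 hz Finset.univ (fun i ↦ c i - (f (c i) : ℝ))
    ?_ ?_ i (Finset.mem_univ i))
  · have h : ∑ i, f (c i) = 1 := by
      rw [← map_sum, hc]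
      simpa using hfq 1
    rw [Finset.sum_sub_distrib, hc, ← Rat.cast_sum, h]
    simp
  · choose zq hzq using hzq
    choose xq hxq using hx
    funext j
    have hreal : ∑ i, c i * (zq i j : ℝ) = xq j := by
      rw [← hxq, ← hcx]
      simp [hzq]
    have hrat : ∑ i, f (c i) * zq i j = xq j := by
      rw [← hfq (xq j), ← hreal, map_sum]
      simp only [hmul]
    have hcast : ∑ i, (f (c i) : ℝ) * (zq i j : ℝ) = xq j := by exact_mod_cast hrat
    simp [hzq, sub_mul, Finset.sum_sub_distrib, hreal, hcast]

/-- A rational point in the real convex hull of finitely many rational points is a rational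
convex combination of them. -/
theorem exists_rat_weights_of_mem_convexHull_range {ι κ : Type*} [Fintype ι]
    {v : ι → κ → ℝ} (hv : ∀ i j, ∃ q : ℚ, v i j = q) {x : κ → ℝ}
    (hx : ∀ j, ∃ q : ℚ, x j = q) (hxv : x ∈ convexHull ℝ (Set.range v)) :
    ∃ c : ι → ℚ, (∀ i, 0 ≤ c i) ∧ ∑ i, c i = 1 ∧ ∑ i, (c i : ℝ) • v i = x := by
  classical
  obtain ⟨τ, _, z, a, hzv, hz, ha, ha1, hax⟩ := eq_pos_convex_span_of_mem_convexHull hxv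
  choose g hg using fun t ↦ hzv (Set.mem_range_self t)
  obtain ⟨q, hq⟩ := hz.exists_rat_weights (fun t j ↦ hg t ▸ hv (g t) j) hx ha1 hax
  refine ⟨fun i ↦ ∑ t with g t = i, q t, fun i ↦ Finset.sum_nonneg fun t _ ↦ ?_, ?_, ?_⟩
  · have := ha t
    rw [hq] at this
    exact_mod_cast this.le
  · refine (Finset.sum_fiberwise Finset.univ g q).trans ?_
    simp only [hq] at ha1
    exact_mod_cast ha1
  · rw [← hax, ← Finset.sum_fiberwise Finset.univ g]
    refine Finset.sum_congr rfl fun i _ ↦ ?_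
    rw [Rat.cast_sum, Finset.sum_smul]
    refine Finset.sum_congr rfl fun t ht ↦ ?_
    rw [hq, ← hg t, (Finset.mem_filter.1 ht).2]

open Filter Topology in
/-- A segment ending at a relative interior point of a set can be prolonged slightly beyond
that point within the set. -/
theorem eventually_add_smul_sub_mem_of_mem_intrinsicInterior {E : Type*} [NormedAddCommGroup E]
    [NormedSpace ℝ E] {s : Set E} {x y : E} (hx : x ∈ intrinsicInterior ℝ s) (hy : y ∈ s) :
    ∀ᶠ t : ℝ in 𝓝 0, x + t • (x - y) ∈ s := by
  obtain ⟨p, hp, rfl⟩ := mem_intrinsicInterior.1 hx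
  have hmem (t : ℝ) : (p : E) + t • ((p : E) - y) ∈ affineSpan ℝ s := by
    have := AffineSubspace.smul_vsub_vadd_mem _ t p.2 (subset_affineSpan ℝ s hy) p.2
    simpa [add_comm] using this
  have hcont : Continuous fun t : ℝ ↦ (⟨p + t • ((p : E) - y), hmem t⟩ : affineSpan ℝ s) :=
    Continuous.subtype_mk (by fun_prop) _
  have h0 : (⟨p + (0 : ℝ) • ((p : E) - y), hmem 0⟩ : affineSpan ℝ s) = p := by
    ext
    simp
  exact hcont.continuousAt.eventually_mem (by rw [h0]; exact mem_interior_iff_mem_nhds.1 hp)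

/-- Convex-geometric step in the proof of Lemma 5.1: a rational point `w` in the
relative interior of the convex hull `F` of rational points `v 1, …, v n` can be
written as a rational convex combination of `v 1, …, v n` together with a prescribed
rational point `v₀ ∈ F`, with strictly positive weight on `v₀`. -/
theorem stmt_5 (d n : ℕ) (hn : 1 ≤ n)
    (v₀ : Fin d → ℝ) (hv₀ : ∀ j, ∃ q : ℚ, v₀ j = (q : ℝ))
    (v : Fin n → (Fin d → ℝ)) (hv : ∀ i j, ∃ q : ℚ, v i j = (q : ℝ))
    (w : Fin d → ℝ) (hw : ∀ j, ∃ q : ℚ, w j = (q : ℝ))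
    (F : Set (Fin d → ℝ)) (hF : F = convexHull ℝ (Set.range v))
    (hv₀F : v₀ ∈ F) (hwF : w ∈ intrinsicInterior ℝ F) :
    ∃ (μ₀ : ℚ) (μ : Fin n → ℚ), 0 < μ₀ ∧ (∀ i, 0 ≤ μ i) ∧
      (μ₀ + ∑ i, μ i = 1) ∧
      w = (μ₀ : ℝ) • v₀ + ∑ i, (μ i : ℝ) • v i := by
  subst hF
  have htend := (tendsto_one_div_add_atTop_nhds_zero_nat (𝕜 := ℝ)).eventually
    (eventually_add_smul_sub_mem_of_mem_intrinsicInterior hwF hv₀F)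
  obtain ⟨m, hm⟩ := htend.exists
  obtain ⟨t, ht, htm⟩ : ∃ t : ℚ, 0 < t ∧ (t : ℝ) = 1 / ((m : ℝ) + 1) :=
    ⟨1 / ((m : ℚ) + 1), by positivity, by push_cast; rfl⟩
  rw [← htm] at hm
  obtain ⟨c, hc0, hc1, hc⟩ := exists_rat_weights_of_mem_convexHull_range hv (fun j ↦ by
    obtain ⟨a, ha⟩ := hw j
    obtain ⟨b, hb⟩ := hv₀ j
    exact ⟨a + t * (a - b), by simp [ha, hb]⟩) hm
  refine ⟨t / (1 + t), fun i ↦ c i / (1 + t), by positivity,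
    fun i ↦ div_nonneg (hc0 i) (by positivity), ?_, ?_⟩
  · rw [← Finset.sum_div, hc1, ← add_div, add_comm, div_self (by positivity)]
  · have hsum : ∑ i, ((c i / (1 + t) : ℚ) : ℝ) • v i
        = (1 + t : ℝ)⁻¹ • (w + (t : ℝ) • (w - v₀)) := by
      rw [← hc, Finset.smul_sum]
      refine Finset.sum_congr rfl fun i _ ↦ ?_
      rw [smul_smul]
      push_cast
      rw [div_eq_inv_mul]
    rw [hsum]
    funext j
    simp only [Pi.add_apply, Pi.smul_apply, Pi.sub_apply, smul_eq_mul]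
    push_cast
    field_simp
    ring
end

section
/- Let G be a finitely presented group, let g_1, …, g_k be a finite generating family of G, and let ψ : G → ℤ be a surjective group homomorphism such that the ℚ-vector space ℚ ⊗_ℤ Ab(ker ψ) is finite-dimensional. Then there exists ε > 0 with the following property: for every surjective group homomorphism φ : G → ℤ for which there exists a nonzero rational number r with |r·φ(g_i) − ψ(g_i)| < ε for all i = 1, …, k, the ℚ-vector space ℚ ⊗_ℤ Ab(ker φ) is finite-dimensional. (This is the group-theoretic form of Lemma 3.2: nonvanishing of the Alexander polynomial with respect to a primitive class ψ — which, for a finitely presented group, is equivalent to finite-dimensionality of ℚ ⊗ Ab(ker ψ) — is a projectively open condition on the primitive cohomology class.) -/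
open TensorProduct

/-- A crossed homomorphism from `G` to an `R`-module on which `G` acts through `c : G →* R`. -/
def IsCrossedHom {G R M : Type*} [Group G] [CommRing R] [AddCommGroup M] [Module R M]
    (c : G →* R) (d : G → M) : Prop :=
  ∀ x y, d (x * y) = d x + c x • d y

namespace IsCrossedHom

section Basic

variable {G R M : Type*} [Group G] [CommRing R] [AddCommGroup M] [Module R M]
  {c : G →* R} {d : G → M}

theorem map_one (hd : IsCrossedHom c d) : d 1 = 0 := by
  simpa using hd 1 1

theorem map_inv (hd : IsCrossedHom c d) (x : G) : d x⁻¹ = -(c x⁻¹ • d x) := by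
  have h := hd x⁻¹ x
  rw [inv_mul_cancel, hd.map_one] at h
  exact eq_neg_of_add_eq_zero_left h.symm

theorem mem_of_closure_eq_top (hd : IsCrossedHom c d) {s : Set G}
    (hs : Subgroup.closure s = ⊤) {N : Submodule R M} (hN : ∀ x ∈ s, d x ∈ N) (x : G) :
    d x ∈ N := by
  have hx : x ∈ Subgroup.closure s := hs ▸ Subgroup.mem_top x
  induction hx using Subgroup.closure_induction with
  | mem x hx => exact hN x hx
  | one => exact hd.map_one ▸ N.zero_mem
  | mul x y _ _ hx hy => exact hd x y ▸ N.add_mem hx (N.smul_mem _ hy)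
  | inv x _ hx => exact hd.map_inv x ▸ N.neg_mem (N.smul_mem _ hx)

/-- Subtracting a principal crossed homomorphism after clearing denominators, so that the result
vanishes at `s`. -/
theorem normalize (hd : IsCrossedHom c d) (s : G) :
    IsCrossedHom c fun x ↦ (1 - c s) • d x - (1 - c x) • d s := by
  intro x y
  simp only [hd x y, map_mul]
  module

end Basic

section Universal

variable {G B : Type*} [Group G] [CommRing B] (c : G →* B) (s : G)

/-- The relations defining the target of the universal crossed homomorphism vanishing at `s`. -/
noncomputable def relations : Submodule B (G →₀ B) :=
  Submodule.span B
    ({v | ∃ x y, v = Finsupp.single (x * y) 1 -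
      (Finsupp.single x 1 + c x • Finsupp.single y 1)} ∪ {Finsupp.single s 1})

/-- The universal crossed homomorphism vanishing at `s`. -/
noncomputable def universal (x : G) : (G →₀ B) ⧸ relations c s :=
  (relations c s).mkQ (Finsupp.single x 1)

theorem isCrossedHom_universal : IsCrossedHom c (universal c s) := by
  intro x y
  rw [← sub_eq_zero]
  simp only [universal, ← map_smul, ← map_add, ← map_sub]
  exact (Submodule.Quotient.mk_eq_zero _).2 (Submodule.subset_span (Or.inl ⟨x, y, rfl⟩))

theorem universal_self : universal c s s = 0 :=
  (Submodule.Quotient.mk_eq_zero _).2 (Submodule.subset_span (Or.inr rfl))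

theorem span_range_universal : Submodule.span B (Set.range (universal c s)) = ⊤ := by
  have : Set.range (universal c s) =
      (relations c s).mkQ '' Set.range fun x : G ↦ Finsupp.single x (1 : B) := by
    rw [← Set.range_comp]; rfl
  have h : Submodule.span B (Set.range fun x : G ↦ Finsupp.single x (1 : B)) = ⊤ := by
    simpa using (Finsupp.basisSingleOne (R := B) (ι := G)).span_eq
  rw [this, Submodule.span_image, h, Submodule.map_top, Submodule.range_mkQ]

theorem finite_universal {t : Set G} (ht : t.Finite) (hgen : Subgroup.closure t = ⊤) :
    Module.Finite B ((G →₀ B) ⧸ relations c s) := by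
  refine ⟨Submodule.fg_def.2 ⟨universal c s '' t, ht.image _, ?_⟩⟩
  rw [eq_top_iff, ← span_range_universal c s, Submodule.span_le]
  rintro _ ⟨x, rfl⟩
  exact (isCrossedHom_universal c s).mem_of_closure_eq_top hgen
    (fun y hy ↦ Submodule.subset_span (Set.mem_image_of_mem _ hy)) x

variable {c s}

theorem exists_linearMap_universal {M : Type*} [AddCommGroup M] [Module B M] {d : G → M}
    (hd : IsCrossedHom c d) (hs : d s = 0) :
    ∃ f : ((G →₀ B) ⧸ relations c s) →ₗ[B] M, ∀ x, f (universal c s x) = d x := by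
  have hle : relations c s ≤ (Finsupp.linearCombination B d).ker := by
    refine Submodule.span_le.2 ?_
    rintro v (⟨x, y, rfl⟩ | hv)
    · simp [hd x y]
    · rw [Set.mem_singleton_iff.1 hv]
      simp [hs]
  refine ⟨(relations c s).liftQ _ hle, fun x ↦ ?_⟩
  rw [universal, Submodule.mkQ_apply, Submodule.liftQ_apply]
  simp

/-- If every crossed homomorphism to the residue field of `P` vanishing at `s` is zero, then
some element outside `P` kills all crossed homomorphisms vanishing at `s`. -/
theorem exists_smul_eq_zero {t : Set G} (ht : t.Finite) (hgen : Subgroup.closure t = ⊤)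
    (P : Ideal B) [P.IsPrime]
    (H : ∀ d : G → P.ResidueField,
      IsCrossedHom ((algebraMap B P.ResidueField : B →* P.ResidueField).comp c) d →
        d s = 0 → ∀ x, d x = 0) :
    ∃ D ∉ P, ∀ {R M : Type*} [CommRing R] [AddCommGroup M] [Module R M] (f : B →+* R)
      (d : G → M), IsCrossedHom ((f : B →* R).comp c) d → d s = 0 → ∀ x, f D • d x = 0 := by
  have := finite_universal c s ht hgen
  have hP : (⟨P, ‹_›⟩ : PrimeSpectrum B) ∉ Module.support B ((G →₀ B) ⧸ relations c s) := by
    rw [Module.mem_support_iff_nontrivial_residueField_tensorProduct]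
    rw [not_nontrivial_iff_subsingleton]
    refine subsingleton_of_forall_eq 0 fun v ↦
      (Module.forall_dual_apply_eq_zero_iff P.ResidueField v).1 fun f ↦ ?_
    let F : ((G →₀ B) ⧸ relations c s) →ₗ[B] P.ResidueField :=
      f.restrictScalars B ∘ₗ TensorProduct.mk B P.ResidueField _ 1
    have hF : F = 0 := by
      refine LinearMap.ext_on_range (span_range_universal c s) fun x ↦ ?_
      refine H (fun x ↦ F (universal c s x)) (fun x y ↦ ?_) ?_ x
      · simp only [isCrossedHom_universal c s x y, map_add, map_smul]
        simp [Algebra.smul_def]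
      · simp only [universal_self, map_zero]
    induction v with
    | zero => simp
    | tmul a m =>
      have h : F m = 0 := by rw [hF]; rfl
      rw [← mul_one a, ← smul_eq_mul, ← TensorProduct.smul_tmul', map_smul]
      exact (congrArg (a • ·) h).trans (smul_zero a)
    | add v w hv hw => rw [map_add, hv, hw, add_zero]
  rw [Module.mem_support_iff_of_finite, SetLike.not_le_iff_exists] at hP
  obtain ⟨D, hD, hDP⟩ := hP
  refine ⟨D, hDP, fun {R M} _ _ _ f d hd hs x ↦ ?_⟩
  let : Module B M := Module.compHom M f
  have hd' : IsCrossedHom c d := hd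
  obtain ⟨F, hF⟩ := exists_linearMap_universal hd' hs
  have : D • d x = 0 := by
    rw [← hF, ← map_smul, Module.mem_annihilator.1 hD, map_zero]
  exact this

end Universal

end IsCrossedHom

namespace MonoidAlgebra

theorem coeff_aeval_of_ofAdd_one (q : Polynomial ℚ) (n : ℕ) :
    (Polynomial.aeval (of ℚ (Multiplicative ℤ) (.ofAdd 1)) q).coeff (.ofAdd (n : ℤ)) =
      q.coeff n := by
  induction q using Polynomial.induction_on' with
  | add p q hp hq => simp only [map_add, coeff_add, Finsupp.add_apply, Polynomial.coeff_add, hp, hq]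
  | monomial m a =>
    rw [Polynomial.aeval_monomial, ← map_pow, ← ofAdd_nsmul]
    simp [Polynomial.coeff_monomial, Finsupp.single_apply]

theorem transcendental_of_ofAdd_one :
    Transcendental ℚ (of ℚ (Multiplicative ℤ) (.ofAdd 1)) := by
  rw [transcendental_iff]
  intro q hq
  ext n
  rw [← coeff_aeval_of_ofAdd_one, hq]
  simp

theorem exists_pow_mul_eq_aeval (p : MonoidAlgebra ℚ (Multiplicative ℤ)) :
    ∃ (n : ℕ) (q : Polynomial ℚ),
      of ℚ (Multiplicative ℤ) (.ofAdd 1) ^ n * p =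
        Polynomial.aeval (of ℚ (Multiplicative ℤ) (.ofAdd 1)) q := by
  induction p using MonoidAlgebra.induction_on with
  | of m =>
    refine ⟨(-m.toAdd).toNat, Polynomial.X ^ m.toAdd.toNat, ?_⟩
    rw [map_pow, Polynomial.aeval_X, ← map_pow (of ℚ (Multiplicative ℤ)),
      ← map_pow (of ℚ (Multiplicative ℤ)), ← map_mul]
    congr 1
    apply Multiplicative.toAdd.injective
    simp
    omega
  | add a b ha hb =>
    obtain ⟨n, q, hq⟩ := ha
    obtain ⟨m, r, hr⟩ := hb
    refine ⟨n + m, Polynomial.X ^ m * q + Polynomial.X ^ n * r, ?_⟩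
    simp only [map_add, map_mul, map_pow, Polynomial.aeval_X, ← hq, ← hr]
    ring
  | smul r a ha =>
    obtain ⟨n, q, hq⟩ := ha
    exact ⟨n, r • q, by rw [map_smul, ← hq, mul_smul_comm]⟩

theorem finite_quotient_span_singleton {p : MonoidAlgebra ℚ (Multiplicative ℤ)} (hp : p ≠ 0) :
    Module.Finite ℚ (MonoidAlgebra ℚ (Multiplicative ℤ) ⧸ Ideal.span {p}) := by
  let π := Ideal.Quotient.mkₐ ℚ (Ideal.span {p})
  let T := of ℚ (Multiplicative ℤ) (.ofAdd 1)
  obtain ⟨n, q, hq⟩ := exists_pow_mul_eq_aeval p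
  have hT : IsAlgebraic ℚ (π T) := by
    refine ⟨q, ?_, ?_⟩
    · rintro rfl
      rw [map_zero, mul_eq_zero] at hq
      refine hq.elim (fun h ↦ ?_) hp
      rw [← map_pow] at h
      simp at h
    · rw [Polynomial.aeval_algHom_apply, ← hq]
      simp [π]
  have hint : Algebra.IsIntegral ℚ (MonoidAlgebra ℚ (Multiplicative ℤ) ⧸ Ideal.span {p}) := by
    have key : ∀ m : Multiplicative ℤ, IsIntegral ℚ (π (of ℚ _ m)) := by
      intro m
      let : Invertible (π T) := ⟨π (of ℚ _ (.ofAdd (-1))), by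
        rw [← map_mul, ← map_mul, ← ofAdd_add, neg_add_cancel, ofAdd_zero, map_one, map_one], by
        rw [← map_mul, ← map_mul, ← ofAdd_add, add_neg_cancel, ofAdd_zero, map_one, map_one]⟩
      obtain ⟨n, hn | hn⟩ := m.toAdd.eq_nat_or_neg
      · have hm : m = .ofAdd 1 ^ n := by
          apply Multiplicative.toAdd.injective
          simp [hn]
        rw [hm, map_pow, map_pow]
        exact hT.isIntegral.pow n
      · have hm : m = .ofAdd (-1) ^ n := by
          apply Multiplicative.toAdd.injective
          simp [hn]
        rw [hm, map_pow, map_pow]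
        exact hT.invOf.isIntegral.pow n
    refine ⟨fun x ↦ ?_⟩
    obtain ⟨x, rfl⟩ := Ideal.Quotient.mkₐ_surjective ℚ _ x
    induction x using MonoidAlgebra.induction_on with
    | of m => exact key m
    | add a b ha hb => rw [map_add]; exact ha.add hb
    | smul r a ha => rw [map_smul]; exact ha.smul r
  exact Algebra.IsIntegral.finite

end MonoidAlgebra

namespace IsCrossedHom

theorem eq_zero_of_finiteDimensional {G A κ : Type*} [Group G] [CommGroup A] [Field κ]
    [Algebra ℚ κ] {ψ : G →* A}
    [FiniteDimensional ℚ (ℚ ⊗[ℤ] Additive (Abelianization ψ.ker))] {c : G →* κ}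
    (hc : ∀ x ∈ ψ.ker, c x = 1) {s : G} (ht : Transcendental ℚ (c s)) {d : G → κ}
    (hd : IsCrossedHom c d) (hs : d s = 0) (x : G) : d x = 0 := by
  let δ : ψ.ker →* Multiplicative κ :=
    { toFun x := .ofAdd (d x)
      map_one' := congrArg Multiplicative.ofAdd hd.map_one
      map_mul' x y := congrArg Multiplicative.ofAdd (by simp [hd x y, hc x x.2]) }
  let F : ℚ ⊗[ℤ] Additive (Abelianization ψ.ker) →ₗ[ℚ] κ :=
    LinearMap.liftBaseChange ℚ
      (MonoidHom.toAdditiveLeft (Abelianization.lift δ)).toIntLinearMap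
  have hF (q : ℚ) (x : ψ.ker) : F (q ⊗ₜ .ofMul (Abelianization.of x)) = q • d x := by
    rw [LinearMap.liftBaseChange_tmul]
    rfl
  have hconj (x : ψ.ker) : d (s * x * s⁻¹) = c s * d x := by
    rw [hd, hd, hs, hd.map_inv, hs, map_mul, hc x x.2]
    simp
  have hstable : ∀ v ∈ F.range, c s • v ∈ F.range := by
    rintro _ ⟨v, rfl⟩
    induction v with
    | zero => simp
    | add v w hv hw => rw [map_add, smul_add]; exact add_mem hv hw
    | tmul q m =>
      obtain ⟨x, hx⟩ := QuotientGroup.mk_surjective m.toMul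
      obtain rfl : Additive.ofMul (Abelianization.of x) = m := congrArg Additive.ofMul hx
      refine ⟨q ⊗ₜ .ofMul (Abelianization.of ⟨s * x * s⁻¹, ?_⟩), ?_⟩
      · exact ψ.normal_ker.conj_mem _ x.2 s
      · rw [hF, hF, smul_comm, hconj, smul_eq_mul]
  have hbot : F.range = ⊥ := by
    by_contra h
    exact ht (isIntegral_of_smul_mem_submodule F.range h
      (LinearMap.range_eq_map F ▸ Module.Finite.fg_top.map F) (c s) hstable).isAlgebraic
  have hker (x : ψ.ker) : d x = 0 := by
    have : F (1 ⊗ₜ .ofMul (Abelianization.of x)) ∈ F.range := ⟨_, rfl⟩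
    rwa [hbot, Submodule.mem_bot, hF, one_smul] at this
  have hcomm : d (x * s) = d (s * x) := by
    have hmem : x * s * (s * x)⁻¹ ∈ ψ.ker := by
      rw [MonoidHom.mem_ker]
      rw [map_mul, _root_.map_inv, map_mul, map_mul, mul_comm (ψ s), mul_inv_cancel]
    have := hd (x * s * (s * x)⁻¹) (s * x)
    rwa [inv_mul_cancel_right, hker ⟨_, hmem⟩, hc _ hmem, one_smul, zero_add] at this
  have hone : c s ≠ 1 := fun h ↦ ht (h ▸ isAlgebraic_one)
  rw [hd, hd, hs, smul_zero, add_zero, zero_add, smul_eq_mul] at hcomm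
  by_contra hx
  exact hone (mul_right_cancel₀ hx (by rw [one_mul, ← hcomm]))

end IsCrossedHom

theorem Module.finite_of_smul_eq_zero {M : Type*} [AddCommGroup M] [Module ℚ M]
    [Module (MonoidAlgebra ℚ (Multiplicative ℤ)) M]
    [IsScalarTower ℚ (MonoidAlgebra ℚ (Multiplicative ℤ)) M]
    [Module.Finite (MonoidAlgebra ℚ (Multiplicative ℤ)) M]
    {p : MonoidAlgebra ℚ (Multiplicative ℤ)} (hp : p ≠ 0) (h : ∀ m : M, p • m = 0) :
    Module.Finite ℚ M := by
  have := MonoidAlgebra.finite_quotient_span_singleton hp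
  have htors : Module.IsTorsionBySet (MonoidAlgebra ℚ (Multiplicative ℤ)) M
      (Ideal.span {p} : Ideal (MonoidAlgebra ℚ (Multiplicative ℤ))) :=
    (Module.isTorsionBySet_span_singleton_iff p).2 fun m ↦ h m
  let := htors.module
  have : IsScalarTower (MonoidAlgebra ℚ (Multiplicative ℤ))
    (MonoidAlgebra ℚ (Multiplicative ℤ) ⧸ Ideal.span {p}) M := htors.isScalarTower
  have : IsScalarTower ℚ (MonoidAlgebra ℚ (Multiplicative ℤ) ⧸ Ideal.span {p}) M :=
    htors.isScalarTower
  have : Module.Finite (MonoidAlgebra ℚ (Multiplicative ℤ) ⧸ Ideal.span {p}) M :=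
    .of_restrictScalars_finite (MonoidAlgebra ℚ (Multiplicative ℤ)) _ _
  exact .trans (MonoidAlgebra ℚ (Multiplicative ℤ) ⧸ Ideal.span {p}) M

/-- The conjugation action of `G` on the rationalized abelianization of a normal subgroup. -/
noncomputable def Representation.conjAbelianization {G : Type*} [Group G] (K : Subgroup G)
    [K.Normal] : Representation ℚ G (ℚ ⊗[ℤ] Additive (Abelianization K)) where
  toFun x := (MonoidHom.toAdditive
    (Abelianization.map (MulAut.conjNormal x).toMonoidHom)).toIntLinearMap.baseChange ℚ
  map_one' := by
    ext m
    obtain ⟨x, hx⟩ := QuotientGroup.mk_surjective m.toMul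
    obtain rfl : Additive.ofMul (Abelianization.of x) = m := congrArg Additive.ofMul hx
    simp
  map_mul' a b := by
    ext m
    obtain ⟨x, hx⟩ := QuotientGroup.mk_surjective m.toMul
    obtain rfl : Additive.ofMul (Abelianization.of x) = m := congrArg Additive.ofMul hx
    simp

theorem Representation.conjAbelianization_tmul {G : Type*} [Group G] (K : Subgroup G)
    [K.Normal] (g : G) (q : ℚ) (x : K) :
    conjAbelianization K g (q ⊗ₜ .ofMul (Abelianization.of x)) =
      q ⊗ₜ .ofMul (Abelianization.of (MulAut.conjNormal g x)) := rfl

/-- If a nonzero Laurent polynomial kills all crossed homomorphisms vanishing at `s`, twisted by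
`φ`, then the rationalized abelianization of `ker φ` is finite-dimensional. -/
theorem finiteDimensional_of_smul_isCrossedHom {G : Type*} [Group G] {t : Set G}
    (ht : t.Finite) (hgen : Subgroup.closure t = ⊤) {φ : G →* Multiplicative ℤ}
    (hφ : Function.Surjective φ) {s : G} (hs : φ s ≠ 1)
    {p : MonoidAlgebra ℚ (Multiplicative ℤ)} (hp : p ≠ 0)
    (H : ∀ ρ : Representation ℚ (Multiplicative ℤ) (ℚ ⊗[ℤ] Additive (Abelianization φ.ker)),
      ∀ d : G → ρ.asModule, IsCrossedHom ((MonoidAlgebra.of ℚ _).comp φ) d → d s = 0 →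
        ∀ x, p • d x = 0) :
    FiniteDimensional ℚ (ℚ ⊗[ℤ] Additive (Abelianization φ.ker)) := by
  obtain ⟨σ, hσ⟩ := hφ (.ofAdd 1)
  have hσ' (m : Multiplicative ℤ) : φ (zpowersHom G σ m) = m := by
    simp [zpowersHom_apply, hσ, ← ofAdd_zsmul]
  let ρ : Representation ℚ (Multiplicative ℤ) (ℚ ⊗[ℤ] Additive (Abelianization φ.ker)) :=
    (Representation.conjAbelianization φ.ker).comp (zpowersHom G σ)
  let π (x : G) : φ.ker := ⟨x * (zpowersHom G σ (φ x))⁻¹, by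
    rw [MonoidHom.mem_ker, map_mul, map_inv, hσ', mul_inv_cancel]⟩
  let d (x : G) : ρ.asModule := ρ.asModuleEquiv.symm (1 ⊗ₜ .ofMul (Abelianization.of (π x)))
  have hd : IsCrossedHom ((MonoidAlgebra.of ℚ _).comp φ) d := by
    intro x y
    have hπ : π (x * y) = π x * MulAut.conjNormal (zpowersHom G σ (φ x)) (π y) := by
      ext
      simp only [π, Subgroup.coe_mul, MulAut.conjNormal_apply, map_mul]
      group
    simp only [d, MonoidHom.comp_apply, ← Representation.asModuleEquiv_symm_map_rho]
    rw [← map_add, hπ, map_mul, ofMul_mul, TensorProduct.tmul_add]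
    rfl
  have hdker (x : φ.ker) : d x = ρ.asModuleEquiv.symm (1 ⊗ₜ .ofMul (Abelianization.of x)) := by
    have : π x = x := by
      ext
      simp [π, MonoidHom.mem_ker.1 x.2]
    simp only [d, this]
  have hspan : Submodule.span ℚ (d '' φ.ker) = ⊤ := by
    rw [eq_top_iff]
    rintro v -
    obtain ⟨v, rfl⟩ := ρ.asModuleEquiv.symm.surjective v
    induction v with
    | zero => simp
    | add v w hv hw => rw [map_add]; exact add_mem hv hw
    | tmul q m =>
      obtain ⟨x, hx⟩ := QuotientGroup.mk_surjective m.toMul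
      obtain rfl : Additive.ofMul (Abelianization.of x) = m := congrArg Additive.ofMul hx
      rw [← mul_one q, ← smul_eq_mul, ← TensorProduct.smul_tmul', map_smul, ← hdker]
      exact Submodule.smul_mem _ _ (Submodule.subset_span ⟨x, x.2, rfl⟩)
  have hfinite : Module.Finite (MonoidAlgebra ℚ (Multiplicative ℤ)) ρ.asModule := by
    refine ⟨Submodule.fg_def.2 ⟨d '' t, ht.image _, ?_⟩⟩
    rw [eq_top_iff]
    rintro v -
    have hv : v ∈ Submodule.span ℚ (d '' φ.ker) := hspan ▸ Submodule.mem_top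
    rw [← Submodule.restrictScalars_mem ℚ]
    refine Submodule.span_le.2 ?_ hv
    rintro _ ⟨x, -, rfl⟩
    exact hd.mem_of_closure_eq_top hgen
      (fun y hy ↦ Submodule.subset_span (Set.mem_image_of_mem _ hy)) x
  have hp' : p * (1 - MonoidAlgebra.of ℚ _ (φ s)) ≠ 0 := by
    refine mul_ne_zero hp (sub_ne_zero.2 fun h ↦ hs ?_)
    exact MonoidAlgebra.of_injective (h.symm.trans (map_one _).symm)
  have hzero (v : ρ.asModule) : (p * (1 - MonoidAlgebra.of ℚ _ (φ s))) • v = 0 := by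
    have hv : v ∈ Submodule.span ℚ (d '' φ.ker) := hspan ▸ Submodule.mem_top
    induction hv using Submodule.span_induction with
    | mem _ h =>
      obtain ⟨x, hx, rfl⟩ := h
      have := H ρ _ (hd.normalize s) (by simp) x
      simpa [MonoidHom.mem_ker.1 hx, mul_smul, ← MonoidAlgebra.one_def] using this
    | zero => exact smul_zero _
    | add v w _ _ hv hw => rw [smul_add, hv, hw, add_zero]
    | smul q v _ hv => rw [smul_comm, hv, smul_zero]
  have := Module.finite_of_smul_eq_zero hp' hzero
  exact .equiv ρ.asModuleEquiv

theorem MonoidAlgebra.mapDomain_ne_zero_of_forall_ne {R A B C : Type*} [Semiring R]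
    {f : A → B} {g : A → C} {x : MonoidAlgebra R A}
    (h : ∀ a ∈ x.coeff.support, ∀ b ∈ x.coeff.support, f a ≠ f b → g a ≠ g b)
    (hx : mapDomain f x ≠ 0) : mapDomain g x ≠ 0 := by
  contrapose! hx
  have hx' : x.coeff.mapDomain g = 0 := congrArg coeff hx
  by_cases hB : Nonempty B
  · obtain ⟨θ, hθ⟩ : ∃ θ : C → B, ∀ a ∈ x.coeff.support, θ (g a) = f a := by
      classical
      refine ⟨fun c ↦ if hc : ∃ a ∈ x.coeff.support, g a = c then f hc.choose
        else Classical.choice hB, fun a ha ↦ ?_⟩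
      have hc : ∃ b ∈ x.coeff.support, g b = g a := ⟨a, ha, rfl⟩
      beta_reduce
      rw [dif_pos hc]
      by_contra hne
      exact h _ hc.choose_spec.1 a ha hne hc.choose_spec.2
    apply coeff_injective
    rw [coeff_mapDomain, ← Finsupp.mapDomain_congr (f := θ ∘ g) hθ, Finsupp.mapDomain_comp, hx',
      Finsupp.mapDomain_zero]
    rfl
  · ext b
    exact (hB ⟨b⟩).elim

/-- A homomorphism to `ℤ` that is small on a generating set is small at every given element. -/
theorem exists_abs_le_mul {G : Type*} [Group G] {t : Set G} (hgen : Subgroup.closure t = ⊤)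
    (x : G) : ∃ C : ℝ, 0 ≤ C ∧ ∀ (χ : G → ℝ) (ε : ℝ), (∀ y z, χ (y * z) = χ y + χ z) →
      (∀ y ∈ t, |χ y| < ε) → |χ x| ≤ C * ε := by
  have hx : x ∈ Subgroup.closure t := hgen ▸ Subgroup.mem_top x
  have hone (χ : G → ℝ) (hχ : ∀ y z, χ (y * z) = χ y + χ z) : χ 1 = 0 := by
    simpa using hχ 1 1
  induction hx using Subgroup.closure_induction with
  | mem x hx => exact ⟨1, zero_le_one, fun χ ε _ h ↦ by simpa using (h x hx).le⟩
  | one => exact ⟨0, le_rfl, fun χ ε hχ _ ↦ by simp [hone χ hχ]⟩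
  | mul x y _ _ hx hy =>
    obtain ⟨C, hC, h⟩ := hx
    obtain ⟨C', hC', h'⟩ := hy
    refine ⟨C + C', add_nonneg hC hC', fun χ ε hχ ht ↦ ?_⟩
    rw [hχ, add_mul]
    exact (abs_add_le _ _).trans (add_le_add (h χ ε hχ ht) (h' χ ε hχ ht))
  | inv x _ hx =>
    obtain ⟨C, hC, h⟩ := hx
    refine ⟨C, hC, fun χ ε hχ ht ↦ ?_⟩
    have : χ x⁻¹ = -χ x := by
      have := hχ x x⁻¹
      rw [mul_inv_cancel, hone χ hχ] at this
      linarith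
    rw [this, abs_neg]
    exact h χ ε hχ ht

/-- The conditions `ψ x ≠ 0` for `x` in a finite set persist under small projective
perturbations of `ψ`. -/
theorem exists_pos_forall_ne_one {G : Type*} [Group G] {k : ℕ} {g : Fin k → G}
    (hgen : Subgroup.closure (Set.range g) = ⊤) (ψ : G →* Multiplicative ℤ) (S : Finset G) :
    ∃ ε : ℝ, 0 < ε ∧ ∀ φ : G →* Multiplicative ℤ,
      (∃ r : ℚ, r ≠ 0 ∧ ∀ i : Fin k,
        |(r : ℝ) * ((Multiplicative.toAdd (φ (g i)) : ℤ) : ℝ)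
          - ((Multiplicative.toAdd (ψ (g i)) : ℤ) : ℝ)| < ε) →
      ∀ x ∈ S, ψ x ≠ 1 → φ x ≠ 1 := by
  choose C hC h using exists_abs_le_mul hgen
  have hsum : 0 ≤ ∑ x ∈ S, C x := Finset.sum_nonneg fun x _ ↦ hC x
  refine ⟨(1 + ∑ x ∈ S, C x)⁻¹, by positivity, ?_⟩
  rintro φ ⟨r, -, hr⟩ x hx hψx hφx
  have hle := h x (fun y ↦ (r : ℝ) * ((φ y).toAdd : ℤ) - ((ψ y).toAdd : ℤ)) _
    (fun y z ↦ by simp only [map_mul, toAdd_mul, Int.cast_add]; ring)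
    (by rintro _ ⟨i, rfl⟩; exact hr i)
  have hlt : C x * (1 + ∑ x ∈ S, C x)⁻¹ < 1 := by
    rw [← div_eq_mul_inv, div_lt_one (by positivity)]
    have := Finset.single_le_sum (fun x _ ↦ hC x) hx
    linarith
  have hint : (1 : ℝ) ≤ |(((ψ x).toAdd : ℤ) : ℝ)| := by
    exact_mod_cast Int.one_le_abs fun h ↦ hψx (toAdd_eq_zero.1 h)
  simp only [hφx, toAdd_one, Int.cast_zero, mul_zero, zero_sub, abs_neg] at hle
  linarith

/-- Group-theoretic form of Lemma 3.2: for a finitely presented group `G`,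
finite-dimensionality of `ℚ ⊗ Ab(ker ψ)` (nonvanishing of the Alexander polynomial at
the primitive class `ψ`) is a projectively open condition: every surjective
`φ : G → ℤ` which is proportionally `ε`-close to `ψ` on a finite generating family
also has `ℚ ⊗ Ab(ker φ)` finite-dimensional. -/
theorem stmt_6 (G : Type*) [Group G]
    (hfp : ∃ (N : ℕ) (rels : Finset (FreeGroup (Fin N))),
      Nonempty (G ≃* PresentedGroup (rels : Set (FreeGroup (Fin N)))))
    (k : ℕ) (g : Fin k → G) (hgen : Subgroup.closure (Set.range g) = ⊤)
    (ψ : G →* Multiplicative ℤ) (hψ : Function.Surjective ψ)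
    (hfin : FiniteDimensional ℚ (ℚ ⊗[ℤ] Additive (Abelianization ψ.ker))) :
    ∃ ε : ℝ, 0 < ε ∧
      ∀ φ : G →* Multiplicative ℤ, Function.Surjective φ →
        (∃ r : ℚ, r ≠ 0 ∧ ∀ i : Fin k,
          |(r : ℝ) * ((Multiplicative.toAdd (φ (g i)) : ℤ) : ℝ)
            - ((Multiplicative.toAdd (ψ (g i)) : ℤ) : ℝ)| < ε) →
        FiniteDimensional ℚ (ℚ ⊗[ℤ] Additive (Abelianization φ.ker)) := by
  obtain ⟨s, hs⟩ := hψ (.ofAdd 1)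
  let c : G →* MonoidAlgebra ℚ (Abelianization G) :=
    (MonoidAlgebra.of ℚ _).comp Abelianization.of
  let f (χ : G →* Multiplicative ℤ) :
      MonoidAlgebra ℚ (Abelianization G) →ₐ[ℚ] MonoidAlgebra ℚ (Multiplicative ℤ) :=
    MonoidAlgebra.mapDomainAlgHom ℚ ℚ (Abelianization.lift χ)
  have hf (χ : G →* Multiplicative ℤ) (x : G) : f χ (c x) = MonoidAlgebra.of ℚ _ (χ x) := by
    simp [f, c]
  let P := RingHom.ker (f ψ)
  have : P.IsPrime := RingHom.ker_isPrime _
  have hker (x : G) (hx : x ∈ ψ.ker) : algebraMap _ P.ResidueField (c x) = 1 := by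
    rw [← map_one (algebraMap (MonoidAlgebra ℚ (Abelianization G)) P.ResidueField),
      ← sub_eq_zero, ← map_sub,
      Ideal.algebraMap_residueField_eq_zero, RingHom.mem_ker, map_sub, hf, map_one,
      MonoidHom.mem_ker.1 hx, map_one, sub_self]
  have htrans : Transcendental ℚ (algebraMap _ P.ResidueField (c s)) := by
    rw [transcendental_iff]
    intro q hq
    rw [Polynomial.aeval_algebraMap_apply, Ideal.algebraMap_residueField_eq_zero,
      RingHom.mem_ker, ← Polynomial.aeval_algHom_apply, hf, hs] at hq
    exact transcendental_iff.1 MonoidAlgebra.transcendental_of_ofAdd_one q hq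
  obtain ⟨D, hDP, hD⟩ := IsCrossedHom.exists_smul_eq_zero (Set.finite_range g) hgen P
    fun d hd hds ↦ hd.eq_zero_of_finiteDimensional hker htrans hds
  classical
  obtain ⟨ε, hε, hne⟩ := exists_pos_forall_ne_one hgen ψ
    (insert s ((D.coeff.support ×ˢ D.coeff.support).image fun a ↦ a.1.out / a.2.out))
  refine ⟨ε, hε, fun φ hφ hclose ↦ ?_⟩
  have hφs : φ s ≠ 1 := by
    refine hne φ hclose s (Finset.mem_insert_self _ _) ?_
    rw [hs]
    decide
  have hDφ : f φ D ≠ 0 := by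
    refine MonoidAlgebra.mapDomain_ne_zero_of_forall_ne (f := Abelianization.lift ψ)
      (fun a ha b hb hab ↦ ?_) hDP
    have hout (χ : G →* Multiplicative ℤ) (a : Abelianization G) :
        Abelianization.lift χ a = χ a.out := by
      conv_lhs => rw [← QuotientGroup.out_eq' a]
      rfl
    rw [hout, hout, ← div_ne_one, ← map_div] at hab ⊢
    exact hne φ hclose _ (Finset.mem_insert_of_mem
      (Finset.mem_image_of_mem _ (Finset.mk_mem_product ha hb))) hab
  refine finiteDimensional_of_smul_isCrossedHom (Set.finite_range g) hgen hφ hφs hDφ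
    fun ρ d hd hds x ↦ hD (f φ).toRingHom d (fun x y ↦ ?_) hds x
  rw [hd x y]
  congr 2
  exact (hf φ x).symm
end

section
/- Fix an integer e, and let G be the presented group on three generators a, b, c with relators a b a⁻¹ b⁻¹ c^{−e}, a c a⁻¹ c⁻¹, and b c b⁻¹ c⁻¹ (the fundamental group of the oriented circle bundle of Euler number e over the oriented torus). Then: (a) the ℚ-vector space ℚ ⊗_ℤ Ab(G) has dimension 2 if e ≠ 0 and dimension 3 if e = 0; and (b) for every surjective group homomorphism φ : G → ℤ, the ℚ-vector space ℚ ⊗_ℤ Ab(ker φ) has dimension exactly 2. (This is the computation observed in Example 7.1: b₁(N(e)) is 2 or 3 according to whether e ≠ 0 or e = 0, and the Alexander polynomial with respect to every primitive class ψ satisfies Δ^ψ_N(t) ≐ (t−1)², in particular it is nonvanishing and of degree 2.) -/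
open TensorProduct

/-- The rank of an abelian group is the dimension of its rationalization. -/
theorem finrank_rat_tensor_int (A : Type*) [AddCommGroup A] :
    Module.finrank ℚ (ℚ ⊗[ℤ] A) = Module.finrank ℤ A :=
  (TensorProduct.isBaseChange ℤ A ℚ).finrank_eq

/-- A homomorphism of abelian groups with torsion kernel and torsion cokernel preserves ranks. -/
theorem LinearMap.finrank_eq_of_torsion_ker_coker {A V : Type*} [AddCommGroup A] [AddCommGroup V]
    (f : A →ₗ[ℤ] V) (hker : ∀ a, f a = 0 → ∃ n : ℤ, n ≠ 0 ∧ n • a = 0)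
    (hcoker : ∀ v, ∃ n : ℤ, n ≠ 0 ∧ ∃ a, f a = n • v) :
    Module.finrank ℤ A = Module.finrank ℤ V := by
  have h₁ : Module.rank ℤ (LinearMap.ker f) = 0 := by
    rw [rank_eq_zero_iff]
    rintro ⟨a, ha⟩
    obtain ⟨n, hn, h⟩ := hker a ha
    exact ⟨n, hn, Subtype.ext h⟩
  have h₂ : Module.rank ℤ (V ⧸ LinearMap.range f) = 0 := by
    rw [rank_eq_zero_iff]
    intro v
    obtain ⟨v, rfl⟩ := Submodule.Quotient.mk_surjective _ v
    obtain ⟨n, hn, a, h⟩ := hcoker v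
    refine ⟨n, hn, ?_⟩
    rw [← Submodule.Quotient.mk_smul, Submodule.Quotient.mk_eq_zero]
    exact ⟨a, h⟩
  have h₃ := rank_quotient_add_rank_of_isDomain (LinearMap.range f)
  have h₄ := LinearMap.lift_rank_range_add_rank_ker f
  rw [h₁, Cardinal.lift_zero, add_zero] at h₄
  rw [h₂, zero_add] at h₃
  rw [h₃] at h₄
  simpa [Module.finrank] using (congrArg Cardinal.toNat h₄).symm

/-- If `f : K → V` has kernel torsion modulo the commutator subgroup and torsion cokernel, then
`ℚ ⊗ Ab(K)` has the dimension of the rank of `V`. -/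
theorem finrank_rat_tensor_abelianization {K V : Type*} [Group K] [AddCommGroup V]
    (f : K →* Multiplicative V)
    (hker : ∀ k, f k = 1 → ∃ n : ℤ, n ≠ 0 ∧ k ^ n ∈ commutator K)
    (hcoker : ∀ v : V, ∃ n : ℤ, n ≠ 0 ∧ ∃ k, f k = Multiplicative.ofAdd (n • v)) :
    Module.finrank ℚ (ℚ ⊗[ℤ] Additive (Abelianization K)) = Module.finrank ℤ V := by
  rw [finrank_rat_tensor_int]
  refine LinearMap.finrank_eq_of_torsion_ker_coker
    (MonoidHom.toAdditiveLeft (Abelianization.lift f)).toIntLinearMap ?_ ?_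
  · intro a ha
    obtain ⟨k, rfl⟩ : ∃ k, a = Additive.ofMul (Abelianization.of k) :=
      (QuotientGroup.mk_surjective a.toMul).imp fun _ h => h.symm
    obtain ⟨n, hn, h⟩ := hker k ha
    refine ⟨n, hn, ?_⟩
    rw [← ofMul_zpow, ofMul_eq_zero, ← map_zpow]
    exact (QuotientGroup.eq_one_iff (k ^ n)).2 h
  · intro v
    obtain ⟨n, hn, k, h⟩ := hcoker v
    exact ⟨n, hn, Additive.ofMul (Abelianization.of k), h⟩

theorem finrank_rat_tensor_abelianization_congr {K L : Type*} [Group K] [Group L] (ι : K ≃* L) :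
    Module.finrank ℚ (ℚ ⊗[ℤ] Additive (Abelianization K)) =
      Module.finrank ℚ (ℚ ⊗[ℤ] Additive (Abelianization L)) :=
  (LinearEquiv.baseChange ℤ ℚ _ _
    (MulEquiv.toAdditive ι.abelianizationCongr).toIntLinearEquiv).finrank_eq

/-- The kernel of a nonzero functional on `ℤ³` has rank two. -/
theorem finrank_ker_int_functional (l : (ℤ × ℤ × ℤ) →ₗ[ℤ] ℤ) (hl : l ≠ 0) :
    Module.finrank ℤ (LinearMap.ker l) = 2 := by
  have h₁ := (LinearMap.ker l).finrank_quotient_add_finrank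
  rw [l.quotKerEquivRange.finrank_eq] at h₁
  have h₂ : Module.finrank ℤ (LinearMap.range l) ≤ 1 := by
    simpa using Submodule.finrank_le (LinearMap.range l)
  have h₃ : Module.finrank ℤ (LinearMap.range l) ≠ 0 := by
    rw [Ne, Submodule.finrank_eq_zero, LinearMap.range_eq_bot]
    exact hl
  have h₄ : Module.finrank ℤ (ℤ × ℤ × ℤ) = 3 := by simp
  omega

/-- The integral Heisenberg group of Euler number `e`: the triple `(x, y, z)` stands for the
element `a ^ x * b ^ y * c ^ z`, where `c` is central and `a * b * a⁻¹ * b⁻¹ = c ^ e`. -/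
@[ext]
structure EulerHeisenberg (e : ℤ) where
  /-- the exponent of `a` -/
  x : ℤ
  /-- the exponent of `b` -/
  y : ℤ
  /-- the exponent of `c` -/
  z : ℤ

namespace EulerHeisenberg

variable {e : ℤ}

instance : Mul (EulerHeisenberg e) :=
  ⟨fun g h => ⟨g.x + h.x, g.y + h.y, g.z + h.z - e * h.x * g.y⟩⟩

instance : One (EulerHeisenberg e) := ⟨⟨0, 0, 0⟩⟩

instance : Inv (EulerHeisenberg e) := ⟨fun g => ⟨-g.x, -g.y, -g.z - e * g.x * g.y⟩⟩

@[simp] theorem mul_x (g h : EulerHeisenberg e) : (g * h).x = g.x + h.x := rfl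
@[simp] theorem mul_y (g h : EulerHeisenberg e) : (g * h).y = g.y + h.y := rfl
@[simp] theorem mul_z (g h : EulerHeisenberg e) :
    (g * h).z = g.z + h.z - e * h.x * g.y := rfl
@[simp] theorem one_x : (1 : EulerHeisenberg e).x = 0 := rfl
@[simp] theorem one_y : (1 : EulerHeisenberg e).y = 0 := rfl
@[simp] theorem one_z : (1 : EulerHeisenberg e).z = 0 := rfl
@[simp] theorem inv_x (g : EulerHeisenberg e) : g⁻¹.x = -g.x := rfl
@[simp] theorem inv_y (g : EulerHeisenberg e) : g⁻¹.y = -g.y := rfl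
@[simp] theorem inv_z (g : EulerHeisenberg e) : g⁻¹.z = -g.z - e * g.x * g.y := rfl

instance : Group (EulerHeisenberg e) :=
  Group.ofLeftAxioms (fun g h k => by ext <;> simp <;> ring) (fun g => by ext <;> simp)
    (fun g => by ext <;> simp; ring)

theorem zpow_a (n : ℤ) : (⟨1, 0, 0⟩ : EulerHeisenberg e) ^ n = ⟨n, 0, 0⟩ := by
  induction n using Int.induction_on with
  | zero => rfl
  | succ n ih => rw [zpow_add_one, ih]; ext <;> simp
  | pred n ih => rw [zpow_sub_one, ih]; ext <;> simp [sub_eq_add_neg]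

theorem zpow_b (n : ℤ) : (⟨0, 1, 0⟩ : EulerHeisenberg e) ^ n = ⟨0, n, 0⟩ := by
  induction n using Int.induction_on with
  | zero => rfl
  | succ n ih => rw [zpow_add_one, ih]; ext <;> simp
  | pred n ih => rw [zpow_sub_one, ih]; ext <;> simp [sub_eq_add_neg]

theorem zpow_c (n : ℤ) : (⟨0, 0, 1⟩ : EulerHeisenberg e) ^ n = ⟨0, 0, n⟩ := by
  induction n using Int.induction_on with
  | zero => rfl
  | succ n ih => rw [zpow_add_one, ih]; ext <;> simp
  | pred n ih => rw [zpow_sub_one, ih]; ext <;> simp [sub_eq_add_neg]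

theorem eq_zpow_mul_zpow_mul_zpow (g : EulerHeisenberg e) :
    g = ⟨1, 0, 0⟩ ^ g.x * ⟨0, 1, 0⟩ ^ g.y * ⟨0, 0, 1⟩ ^ g.z := by
  rw [zpow_a, zpow_b, zpow_c]
  ext <;> simp

theorem commutator_a_b : (⟨1, 0, 0⟩ * ⟨0, 1, 0⟩ * ⟨1, 0, 0⟩⁻¹ * ⟨0, 1, 0⟩⁻¹ : EulerHeisenberg e) =
    ⟨0, 0, 1⟩ ^ e := by
  rw [zpow_c]
  ext <;> simp

theorem zpow_mul_zpow_of_commutator_eq {G : Type*} [Group G] {a b c : G}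
    (hab : a * b * a⁻¹ * b⁻¹ = c ^ e) (hac : Commute a c) (hbc : Commute b c) (x y : ℤ) :
    b ^ y * a ^ x = a ^ x * b ^ y * c ^ (-(e * x * y)) := by
  have h₁ : a * b ^ y * a⁻¹ = c ^ (e * y) * b ^ y := by
    rw [← conj_zpow, mul_inv_eq_iff_eq_mul.1 hab, (hbc.zpow_right e).symm.mul_zpow, zpow_mul]
  have h₂ : (b ^ y)⁻¹ * a * b ^ y = c ^ (e * y) * a := by
    have h : Commute (b ^ y) (c ^ (e * y)) := hbc.zpow_zpow _ _
    rw [mul_assoc, mul_inv_eq_iff_eq_mul.1 h₁, h.symm.eq]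
    group
  have h₃ : (b ^ y)⁻¹ * a ^ x * b ^ y = c ^ (e * x * y) * a ^ x := by
    have h := conj_zpow (a := (b ^ y)⁻¹) (b := a) (i := x)
    rw [inv_inv] at h
    rw [← h, h₂, (hac.symm.zpow_left _).mul_zpow, ← zpow_mul]
    congr 2
    ring
  have h₄ : Commute (a ^ x * b ^ y) (c ^ (e * x * y)) :=
    (hac.zpow_zpow _ _).mul_left (hbc.zpow_zpow _ _)
  rw [zpow_neg, eq_mul_inv_iff_mul_eq, mul_assoc, (hac.zpow_zpow x (e * x * y)).eq, ← h₃]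
  group

/-- The universal property of the Heisenberg group. -/
def lift {G : Type*} [Group G] (a b c : G) (hab : a * b * a⁻¹ * b⁻¹ = c ^ e)
    (hac : Commute a c) (hbc : Commute b c) : EulerHeisenberg e →* G :=
  MonoidHom.mk' (fun g => a ^ g.x * b ^ g.y * c ^ g.z) fun g h => by
    have h₁ : Commute (c ^ g.z) (a ^ h.x * b ^ h.y) :=
      (hac.symm.zpow_zpow _ _).mul_right (hbc.symm.zpow_zpow _ _)
    have h₂ : Commute (c ^ (-(e * h.x * g.y))) (b ^ h.y) := hbc.symm.zpow_zpow _ _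
    calc a ^ (g.x + h.x) * b ^ (g.y + h.y) * c ^ (g.z + h.z - e * h.x * g.y)
        = a ^ g.x * (a ^ h.x * b ^ g.y) * (b ^ h.y * c ^ (-(e * h.x * g.y))) *
            c ^ g.z * c ^ h.z := by group
      _ = a ^ g.x * (b ^ g.y * a ^ h.x) * b ^ h.y * c ^ g.z * c ^ h.z := by
          rw [← h₂.eq, zpow_mul_zpow_of_commutator_eq hab hac hbc]
          simp only [mul_assoc]
      _ = a ^ g.x * b ^ g.y * ((a ^ h.x * b ^ h.y) * c ^ g.z) * c ^ h.z := by
          simp only [mul_assoc]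
      _ = _ := by
          rw [← h₁.eq]
          simp only [mul_assoc]

theorem lift_apply {G : Type*} [Group G] (a b c : G) (hab : a * b * a⁻¹ * b⁻¹ = c ^ e)
    (hac : Commute a c) (hbc : Commute b c) (g : EulerHeisenberg e) :
    lift a b c hab hac hbc g = a ^ g.x * b ^ g.y * c ^ g.z := rfl

/-- The standard presentation of the Heisenberg group. -/
theorem nonempty_presentedGroup_mulEquiv (e : ℤ) {a b c : FreeGroup (Fin 3)}
    (ha : a = FreeGroup.of 0) (hb : b = FreeGroup.of 1) (hc : c = FreeGroup.of 2)
    {rels : Set (FreeGroup (Fin 3))}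
    (hrels : rels =
      {a * b * a⁻¹ * b⁻¹ * c ^ (-e), a * c * a⁻¹ * c⁻¹, b * c * b⁻¹ * c⁻¹}) :
    Nonempty (PresentedGroup rels ≃* EulerHeisenberg e) := by
  let gen : Fin 3 → EulerHeisenberg e := ![⟨1, 0, 0⟩, ⟨0, 1, 0⟩, ⟨0, 0, 1⟩]
  have hgen : ∀ r ∈ rels, FreeGroup.lift gen r = 1 := by
    subst ha hb hc hrels
    rintro r (rfl | rfl | rfl)
    · simp only [map_mul, map_inv, map_zpow, FreeGroup.lift_apply_of]
      rw [zpow_neg, mul_inv_eq_one]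
      exact commutator_a_b
    · simp only [map_mul, map_inv, FreeGroup.lift_apply_of]
      ext <;> simp [gen]
    · simp only [map_mul, map_inv, FreeGroup.lift_apply_of]
      ext <;> simp [gen]
  have hab : PresentedGroup.mk rels a * PresentedGroup.mk rels b * (PresentedGroup.mk rels a)⁻¹ *
      (PresentedGroup.mk rels b)⁻¹ = PresentedGroup.mk rels c ^ e := by
    have h := PresentedGroup.one_of_mem (rels := rels)
      (x := a * b * a⁻¹ * b⁻¹ * c ^ (-e)) (by simp [hrels])
    rwa [map_mul, zpow_neg, map_inv, mul_inv_eq_one, map_zpow, map_mul, map_mul, map_mul, map_inv,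
      map_inv] at h
  have hac : Commute (PresentedGroup.mk rels a) (PresentedGroup.mk rels c) := by
    have h := PresentedGroup.one_of_mem (rels := rels) (x := a * c * a⁻¹ * c⁻¹) (by simp [hrels])
    rwa [map_mul, map_inv, mul_inv_eq_one, map_mul, map_inv, mul_inv_eq_iff_eq_mul, map_mul] at h
  have hbc : Commute (PresentedGroup.mk rels b) (PresentedGroup.mk rels c) := by
    have h := PresentedGroup.one_of_mem (rels := rels) (x := b * c * b⁻¹ * c⁻¹) (by simp [hrels])
    rwa [map_mul, map_inv, mul_inv_eq_one, map_mul, map_inv, mul_inv_eq_iff_eq_mul, map_mul] at h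
  refine ⟨MonoidHom.toMulEquiv (PresentedGroup.toGroup hgen) (lift _ _ _ hab hac hbc) ?_ ?_⟩
  · refine PresentedGroup.ext fun i => ?_
    rw [MonoidHom.comp_apply, PresentedGroup.toGroup.of, lift_apply]
    fin_cases i <;> simp [gen, ha, hb, hc] <;> rfl
  · refine MonoidHom.ext fun g => ?_
    subst ha hb hc
    rw [MonoidHom.comp_apply, lift_apply, map_mul, map_mul, map_zpow, map_zpow, map_zpow]
    change PresentedGroup.toGroup hgen (.of 0) ^ g.x * PresentedGroup.toGroup hgen (.of 1) ^ g.y *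
      PresentedGroup.toGroup hgen (.of 2) ^ g.z = g
    simp only [PresentedGroup.toGroup.of]
    exact (eq_zpow_mul_zpow_mul_zpow g).symm

theorem finrank_abelianization (e : ℤ) :
    Module.finrank ℚ (ℚ ⊗[ℤ] Additive (Abelianization (EulerHeisenberg e))) =
      if e = 0 then 3 else 2 := by
  split_ifs with he
  · subst he
    let f : EulerHeisenberg 0 →* Multiplicative (ℤ × ℤ × ℤ) :=
      MonoidHom.mk' (fun g => Multiplicative.ofAdd (g.x, g.y, g.z)) fun g h => by
        simp [← ofAdd_add]
    rw [finrank_rat_tensor_abelianization f]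
    · simp
    · intro g hg
      refine ⟨1, one_ne_zero, ?_⟩
      have h : (g.x, g.y, g.z) = (0, 0, 0) := hg
      simp only [Prod.mk.injEq] at h
      have h' : g = 1 := EulerHeisenberg.ext h.1 h.2.1 h.2.2
      simp [h', one_mem]
    · rintro ⟨x, y, z⟩
      exact ⟨1, one_ne_zero, ⟨x, y, z⟩, by rw [one_smul]; rfl⟩
  · let f : EulerHeisenberg e →* Multiplicative (ℤ × ℤ) :=
      MonoidHom.mk' (fun g => Multiplicative.ofAdd (g.x, g.y)) fun g h => by
        simp [← ofAdd_add]
    rw [finrank_rat_tensor_abelianization f]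
    · simp
    · intro g hg
      refine ⟨e, he, ?_⟩
      have h : (g.x, g.y) = (0, 0) := hg
      simp only [Prod.mk.injEq] at h
      have h' : g = ⟨0, 0, 1⟩ ^ g.z := by
        rw [zpow_c]
        exact EulerHeisenberg.ext h.1 h.2 rfl
      rw [h', zpow_comm, ← commutator_a_b]
      exact zpow_mem (Subgroup.commutator_mem_commutator (Subgroup.mem_top _)
        (Subgroup.mem_top _)) _
    · rintro ⟨x, y⟩
      exact ⟨1, one_ne_zero, ⟨x, y, 0⟩, by rw [one_smul]; rfl⟩

/-- Every homomorphism to `ℤ` is linear in the coordinates, and kills the fibre class if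
`e ≠ 0`. -/
theorem exists_toAdd_apply_eq (φ : EulerHeisenberg e →* Multiplicative ℤ) :
    ∃ p q r : ℤ, r * e = 0 ∧ ∀ g, (φ g).toAdd = p * g.x + q * g.y + r * g.z := by
  refine ⟨(φ ⟨1, 0, 0⟩).toAdd, (φ ⟨0, 1, 0⟩).toAdd, (φ ⟨0, 0, 1⟩).toAdd, ?_, fun g => ?_⟩
  · have h := congrArg (fun g => (φ g).toAdd) (commutator_a_b (e := e))
    simp only [map_mul, map_inv, map_zpow, toAdd_mul, toAdd_inv, toAdd_zpow, smul_eq_mul] at h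
    linarith
  · conv_lhs => rw [eq_zpow_mul_zpow_mul_zpow g]
    simp only [map_mul, map_zpow, toAdd_mul, toAdd_zpow, smul_eq_mul]
    ring

theorem finrank_abelianization_ker (φ : EulerHeisenberg e →* Multiplicative ℤ)
    (hφ : Function.Surjective φ) :
    Module.finrank ℚ (ℚ ⊗[ℤ] Additive (Abelianization φ.ker)) = 2 := by
  obtain ⟨p, q, r, hre, hpqr⟩ := exists_toAdd_apply_eq φ
  let l : (ℤ × ℤ × ℤ) →ₗ[ℤ] ℤ :=
    { toFun := fun v => 2 * p * v.1 + 2 * q * v.2.1 + r * v.2.2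
      map_add' := fun v w => by simp; ring
      map_smul' := fun n v => by simp; ring }
  have hl_apply : ∀ x y w, l (x, y, w) = 2 * p * x + 2 * q * y + r * w := fun _ _ _ => rfl
  have hl : l ≠ 0 := by
    intro h
    obtain ⟨g, hg⟩ := hφ (Multiplicative.ofAdd 1)
    have h₁ : l (g.x, g.y, 2 * g.z) = 0 := by rw [h]; rfl
    have h₂ := hpqr g
    rw [hg, toAdd_ofAdd] at h₂
    rw [hl_apply] at h₁
    linarith
  have hker : ∀ g : EulerHeisenberg e, g ∈ φ.ker ↔ p * g.x + q * g.y + r * g.z = 0 := fun g => by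
    rw [MonoidHom.mem_ker, ← hpqr, toAdd_eq_zero]
  have hcomm : ∀ g h : EulerHeisenberg e, g ∈ φ.ker → h ∈ φ.ker →
      e * (g.x * h.y - h.x * g.y) = 0 := by
    intro g h hg hh
    rw [hker] at hg hh
    by_cases he : e = 0
    · exact mul_eq_zero_of_left he _
    have hr : r = 0 := (mul_eq_zero.1 hre).resolve_right he
    have h₁ : p * (g.x * h.y - h.x * g.y) = 0 := by
      subst hr
      linear_combination h.y * hg - g.y * hh
    have h₂ : q * (g.x * h.y - h.x * g.y) = 0 := by
      subst hr
      linear_combination g.x * hh - h.x * hg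
    have h₃ : g.x * h.y - h.x * g.y = 0 := by
      by_contra hne
      apply hl
      ext <;> simp [l, (mul_eq_zero.1 h₁).resolve_right hne,
        (mul_eq_zero.1 h₂).resolve_right hne, hr]
    rw [h₃, mul_zero]
  let f : φ.ker →* Multiplicative (LinearMap.ker l) :=
    MonoidHom.mk' (fun g => Multiplicative.ofAdd
      ⟨(g.1.x, g.1.y, 2 * g.1.z + e * g.1.x * g.1.y), by
        rw [LinearMap.mem_ker, hl_apply]
        linear_combination 2 * (hker g.1).1 g.2 + g.1.x * g.1.y * hre⟩) fun g h => by
      rw [← ofAdd_add]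
      refine congrArg Multiplicative.ofAdd (Subtype.ext ?_)
      simp only [Subgroup.coe_mul, mul_x, mul_y, mul_z, Submodule.coe_add, Prod.mk_add_mk,
        Prod.mk.injEq, true_and]
      linear_combination hcomm g.1 h.1 g.2 h.2
  rw [finrank_rat_tensor_abelianization f, finrank_ker_int_functional l hl]
  · intro g hg
    refine ⟨1, one_ne_zero, ?_⟩
    have h : (g.1.x, g.1.y, 2 * g.1.z + e * g.1.x * g.1.y) = (0, 0, 0) := congrArg Subtype.val hg
    simp only [Prod.mk.injEq] at h
    obtain ⟨hx, hy, hz⟩ := h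
    have hz' : g.1.z = 0 := by simpa [hx] using hz
    have h' : g = 1 := Subtype.ext (EulerHeisenberg.ext hx hy hz')
    simp [h', one_mem]
  · rintro ⟨⟨x, y, w⟩, hv⟩
    rw [LinearMap.mem_ker, hl_apply] at hv
    refine ⟨2, two_ne_zero, ⟨⟨2 * x, 2 * y, w - 2 * e * x * y⟩, ?_⟩, ?_⟩
    · rw [hker]
      linear_combination hv - 2 * x * y * hre
    · refine congrArg Multiplicative.ofAdd (Subtype.ext ?_)
      simp only [Submodule.coe_smul, Prod.smul_mk, smul_eq_mul, Prod.mk.injEq, true_and]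
      ring

end EulerHeisenberg

/-- Example 7.1: for the fundamental group `G` of the oriented circle bundle of Euler
number `e` over the torus, `ℚ ⊗ Ab(G)` has dimension `2` if `e ≠ 0` and `3` if
`e = 0`, and for every surjective `φ : G → ℤ` the space `ℚ ⊗ Ab(ker φ)` has dimension
exactly `2` (i.e. `Δ^φ ≐ (t-1)²`). -/
theorem stmt_9 (e : ℤ) (a b c : FreeGroup (Fin 3))
    (ha : a = FreeGroup.of 0) (hb : b = FreeGroup.of 1) (hc : c = FreeGroup.of 2)
    (rels : Set (FreeGroup (Fin 3)))
    (hrels : rels = {a * b * a⁻¹ * b⁻¹ * c ^ (-e), a * c * a⁻¹ * c⁻¹, b * c * b⁻¹ * c⁻¹}) :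
    (Module.finrank ℚ (ℚ ⊗[ℤ] Additive (Abelianization (PresentedGroup rels)))
        = if e = 0 then 3 else 2) ∧
    ∀ φ : PresentedGroup rels →* Multiplicative ℤ, Function.Surjective φ →
      Module.finrank ℚ (ℚ ⊗[ℤ] Additive (Abelianization φ.ker)) = 2 := by
  obtain ⟨ι⟩ := EulerHeisenberg.nonempty_presentedGroup_mulEquiv e ha hb hc hrels
  refine ⟨?_, fun φ hφ => ?_⟩
  · rw [finrank_rat_tensor_abelianization_congr ι, EulerHeisenberg.finrank_abelianization]
  · have h : φ.ker.map (ι : PresentedGroup rels →* EulerHeisenberg e) =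
        (φ.comp (ι.symm : EulerHeisenberg e →* PresentedGroup rels)).ker := by
      rw [Subgroup.map_equiv_eq_comap_symm, MonoidHom.comap_ker]
    rw [finrank_rat_tensor_abelianization_congr
      ((ι.subgroupMap φ.ker).trans (MulEquiv.subgroupCongr h))]
    exact EulerHeisenberg.finrank_abelianization_ker _ (hφ.comp ι.symm.surjective)
end
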